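/- There exists a constant c ≥ 1 such that for all (x,v) with x > 0 the following two-sided bounds hold: (i) if 0 < x ≤ v³ (so v > 0), then c^{−1} x^{1/6} (v³/x)^{−5/6} e^{−v³/(9x)} ≤ φ₀(x,v) ≤ c x^{1/6} (v³/x)^{−5/6} e^{−v³/(9x)} and c^{−1} x^{−5/6} (v³/x)^{1/6} e^{−v³/(9x)} ≤ φ₋₁(x,v) ≤ c x^{−5/6} (v³/x)^{1/6} e^{−v³/(9x)}; (ii) if x ≥ |v|³, then c^{−1} x^{1/6} ≤ φ₀(x,v) ≤ c x^{1/6} and c^{−1} x^{−5/6} ≤ φ₋₁(x,v) ≤ c x^{−5/6}; (iii) if 0 < x ≤ −v³ (so v < 0), then c^{−1} |v|^{1/2} ≤ φ₀(x,v) ≤ c |v|^{1/2} and c^{−1} |v|^{−5/2} ≤ φ₋₁(x,v) ≤ c |v|^{−5/2}. In particular, φ₀ and φ₋₁ are strictly positive on (0,∞)×ℝ. -/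

import Mathlib

/-!
Writing `w = v³/x`, each of `φ₀`, `φ₋₁` is a power of `x`, times possibly `e^{-w/9}` and a constant
(`Γ(7/6)/Γ(1/6) = 1/6` or its inverse), times `U₁` or `U₂` evaluated at `z = |w|/9 ≥ 0`. Everything
therefore follows from the two global estimates, for `z ≥ 0`,

* `U₁(z) ≍ (1+z)^{-5/6}` (`exists_comparable_U1`): from below, `1+ξ ≤ e^ξ` bounds the integral by a
  Gamma integral with rate `z + 7/6`; from above, drop `(1+ξ)^{-7/6}` when `z ≥ 1` and the
  exponential when `z ≤ 1`.
* `U₂(z) ≍ (1+z)^{1/6}` (`comparable_U2`): from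
  `(1+z) ξ/(1+ξ) ≤ z+ξ ≤ (1+z)(1+ξ)` the variable `z` factors out, leaving Gamma integrals.

In the region `w ≥ 1` (or `w ≤ -1`) `1+z` is comparable to `|w|`, and for `|w| ≤ 1` both `1+z` and
`e^{-z}` are comparable to `1`. The relation `Comparable c a b` keeps track of the constants.
-/

noncomputable section

open MeasureTheory Set Filter
open scoped ENNReal

/-- `U₁(z) = (1/Γ(5/6)) ∫₀^∞ e^{−zξ} ξ^{−1/6} (1+ξ)^{−7/6} dξ`. -/
def U1 (z : ℝ) : ℝ :=
  (1 / Real.Gamma (5/6)) *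
    ∫ ξ in Set.Ioi (0:ℝ), Real.exp (-(z * ξ)) * ξ ^ (-(1:ℝ)/6) * (1 + ξ) ^ (-(7:ℝ)/6)

/-- `U₂(z) = (1/Γ(1/6)) ∫₀^∞ e^{−ξ} ξ^{−5/6} (z+ξ)^{1/6} dξ`. -/
def U2 (z : ℝ) : ℝ :=
  (1 / Real.Gamma (1/6)) *
    ∫ ξ in Set.Ioi (0:ℝ), Real.exp (-ξ) * ξ ^ (-(5:ℝ)/6) * (z + ξ) ^ ((1:ℝ)/6)

/-- The explicit `1/2`-homogeneous solution `φ₀` of the stationary kinetic Kolmogorov equation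
in the half-line with absorbing boundary condition. -/
def phi0 (x v : ℝ) : ℝ :=
  if v < 0 then x ^ ((1:ℝ)/6) * U2 (-(v ^ 3) / (9 * x))
  else (Real.Gamma (7/6) / Real.Gamma (1/6)) * x ^ ((1:ℝ)/6) *
    Real.exp (-(v ^ 3) / (9 * x)) * U1 (v ^ 3 / (9 * x))

/-- The explicit solution `φ₋₁`. -/
def phim1 (x v : ℝ) : ℝ :=
  if v < 0 then x ^ (-(5:ℝ)/6) * U1 (-(v ^ 3) / (9 * x))
  else (Real.Gamma (1/6) / Real.Gamma (7/6)) * x ^ (-(5:ℝ)/6) *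
    Real.exp (-(v ^ 3) / (9 * x)) * U2 (v ^ 3 / (9 * x))

/-! ### Two-sided comparison -/

/-- `a` and `b` agree up to the factor `c`: `c⁻¹ b ≤ a ≤ c b`. -/
def Comparable (c a b : ℝ) : Prop := c⁻¹ * b ≤ a ∧ a ≤ c * b

lemma Comparable.refl (a : ℝ) : Comparable 1 a a := by simp [Comparable]

lemma Comparable.trans {c c' a b d : ℝ} (hc : 0 < c) (h : Comparable c a b)
    (h' : Comparable c' b d) : Comparable (c * c') a d := by
  have hi : 0 ≤ c⁻¹ := by positivity
  refine ⟨?_, ?_⟩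
  · calc (c * c')⁻¹ * d = c⁻¹ * (c'⁻¹ * d) := by rw [mul_inv]; ring
      _ ≤ c⁻¹ * b := by gcongr; exact h'.1
      _ ≤ a := h.1
  · calc a ≤ c * b := h.2
      _ ≤ c * (c' * d) := by gcongr; exact h'.2
      _ = c * c' * d := by ring

lemma Comparable.mul {c c' a b a' b' : ℝ} (hc : 0 < c) (hc' : 0 < c') (hb : 0 ≤ b) (hb' : 0 ≤ b')
    (h : Comparable c a b) (h' : Comparable c' a' b') : Comparable (c * c') (a * a') (b * b') := by
  have hi : 0 ≤ c⁻¹ * b := by positivity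
  have hi' : 0 ≤ c'⁻¹ * b' := by positivity
  refine ⟨?_, ?_⟩
  · calc (c * c')⁻¹ * (b * b') = (c⁻¹ * b) * (c'⁻¹ * b') := by rw [mul_inv]; ring
      _ ≤ a * a' := mul_le_mul h.1 h'.1 hi' (hi.trans h.1)
  · calc a * a' ≤ (c * b) * (c' * b') := mul_le_mul h.2 h'.2 (hi'.trans h'.1) (by positivity)
      _ = _ := by ring

lemma Comparable.mono {c c' a b : ℝ} (hc : 0 < c) (hcc : c ≤ c') (hb : 0 ≤ b)
    (h : Comparable c a b) : Comparable c' a b := by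
  refine ⟨le_trans ?_ h.1, h.2.trans ?_⟩ <;> gcongr

lemma Comparable.pos {c a b : ℝ} (hc : 0 < c) (hb : 0 < b) (h : Comparable c a b) : 0 < a :=
  lt_of_lt_of_le (by positivity) h.1

lemma Comparable.symm {c a b : ℝ} (hc : 0 < c) (h : Comparable c a b) : Comparable c b a := by
  refine ⟨?_, ?_⟩
  · rw [inv_mul_le_iff₀ hc]; exact h.2
  · rw [← inv_mul_le_iff₀ hc]; exact h.1

/-- Powers with exponent in `[-1, 1]` do not worsen the constant. -/
lemma Comparable.rpow {c a b s : ℝ} (hc : 1 ≤ c) (ha : 0 < a) (hb : 0 < b) (hs : |s| ≤ 1)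
    (h : Comparable c a b) : Comparable c (a ^ s) (b ^ s) := by
  have hc0 : 0 < c := by linarith
  have key : ∀ {p q t : ℝ}, 0 < p → 0 < q → 0 ≤ t → t ≤ 1 → p ≤ c * q → p ^ t ≤ c * q ^ t := by
    intro p q t hp hq ht ht1 hpq
    calc p ^ t ≤ (c * q) ^ t := Real.rpow_le_rpow hp.le hpq ht
      _ = c ^ t * q ^ t := Real.mul_rpow hc0.le hq.le
      _ ≤ c ^ (1:ℝ) * q ^ t := by gcongr
      _ = c * q ^ t := by rw [Real.rpow_one]
  have h' := h.symm hc0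
  rcases le_total 0 s with h0 | h0
  · rw [abs_of_nonneg h0] at hs
    exact ⟨by rw [inv_mul_le_iff₀ hc0]; exact key hb ha h0 hs h'.2, key ha hb h0 hs h.2⟩
  · rw [abs_of_nonpos h0] at hs
    have e : ∀ {p : ℝ}, 0 < p → p ^ s = (p⁻¹) ^ (-s) := by
      intro p hp
      rw [Real.inv_rpow hp.le, Real.rpow_neg hp.le, inv_inv]
    have inv_le : ∀ {p q : ℝ}, 0 < p → 0 < q → p ≤ c * q → q⁻¹ ≤ c * p⁻¹ := by
      intro p q hp hq hpq
      rw [inv_eq_one_div, ← div_eq_mul_inv, div_le_div_iff₀ hq hp]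
      linarith
    rw [e ha, e hb]
    refine ⟨?_, ?_⟩
    · rw [inv_mul_le_iff₀ hc0]
      exact key (by positivity) (by positivity) (by linarith) hs (inv_le ha hb h.2)
    · exact key (by positivity) (by positivity) (by linarith) hs (inv_le hb ha h'.2)

/-! ### Estimates for `U₁` and `U₂` -/

lemma Gamma_seven_sixths : Real.Gamma (7/6) = 1/6 * Real.Gamma (1/6) := by
  rw [← Real.Gamma_add_one (by norm_num)]; norm_num

lemma integrableOn_exp_mul_rpow {r s : ℝ} (hr : 0 < r) (hs : -1 < s) :
    IntegrableOn (fun ξ : ℝ => Real.exp (-(r * ξ)) * ξ ^ s) (Ioi 0) := by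
  refine (integrableOn_rpow_mul_exp_neg_mul_rpow (p := 1) hs one_pos hr).congr_fun ?_
    measurableSet_Ioi
  intro ξ _
  simp [mul_comm]

lemma integral_exp_mul_rpow {r a s : ℝ} (hr : 0 < r) (ha : 0 < a) (hs : s = a - 1) :
    ∫ ξ in Ioi (0:ℝ), Real.exp (-(r * ξ)) * ξ ^ s = r ^ (-a) * Real.Gamma a := by
  have h := Real.integral_rpow_mul_exp_neg_mul_Ioi ha hr
  rw [one_div, Real.inv_rpow hr.le, ← Real.rpow_neg hr.le] at h
  rw [← h, hs]
  simp_rw [mul_comm]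

/-- The `U₁` integrand at `z = 0`: `ξ^{-1/6}` controls it near `0` and `ξ^{-4/3}` at infinity. -/
lemma integrableOn_U1_zero :
    IntegrableOn (fun ξ : ℝ => ξ ^ (-(1:ℝ)/6) * (1 + ξ) ^ (-(7:ℝ)/6)) (Ioi 0) := by
  rw [← Ioc_union_Ioi_eq_Ioi (@zero_le_one ℝ _ _ _ _), integrableOn_union]
  have hm : Measurable (fun ξ : ℝ => ξ ^ (-(1:ℝ)/6) * (1 + ξ) ^ (-(7:ℝ)/6)) := by fun_prop
  constructor
  · have h : IntegrableOn (fun ξ : ℝ => ξ ^ (-(1:ℝ)/6)) (Ioc 0 1) :=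
      (intervalIntegrable_iff_integrableOn_Ioc_of_le zero_le_one).mp
        (intervalIntegral.intervalIntegrable_rpow' (by norm_num))
    refine Integrable.mono' h hm.aestronglyMeasurable ?_
    refine ae_restrict_of_forall_mem measurableSet_Ioc fun ξ hξ => ?_
    have h0 : 0 < ξ := hξ.1
    rw [Real.norm_of_nonneg (by positivity)]
    exact mul_le_of_le_one_right (by positivity)
      (Real.rpow_le_one_of_one_le_of_nonpos (by linarith) (by norm_num))
  · have h : IntegrableOn (fun ξ : ℝ => ξ ^ (-(4:ℝ)/3)) (Ioi 1) :=
      integrableOn_Ioi_rpow_of_lt (by norm_num) one_pos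
    refine Integrable.mono' h hm.aestronglyMeasurable ?_
    refine ae_restrict_of_forall_mem measurableSet_Ioi fun ξ hξ => ?_
    have h0 : 0 < ξ := one_pos.trans hξ
    rw [Real.norm_of_nonneg (by positivity)]
    calc ξ ^ (-(1:ℝ)/6) * (1 + ξ) ^ (-(7:ℝ)/6) ≤ ξ ^ (-(1:ℝ)/6) * ξ ^ (-(7:ℝ)/6) := by
          gcongr ?_ * ?_
          exact Real.rpow_le_rpow_of_nonpos h0 (by linarith) (by norm_num)
      _ = ξ ^ (-(4:ℝ)/3) := by rw [← Real.rpow_add h0]; norm_num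

lemma integrableOn_U1 {z : ℝ} (hz : 0 ≤ z) :
    IntegrableOn (fun ξ : ℝ => Real.exp (-(z * ξ)) * ξ ^ (-(1:ℝ)/6) * (1 + ξ) ^ (-(7:ℝ)/6))
      (Ioi 0) := by
  refine Integrable.mono' integrableOn_U1_zero (by fun_prop) ?_
  refine ae_restrict_of_forall_mem measurableSet_Ioi fun ξ hξ => ?_
  have h0 : 0 < ξ := hξ
  rw [Real.norm_of_nonneg (by positivity), mul_assoc]
  exact mul_le_of_le_one_left (by positivity) (Real.exp_le_one_iff.mpr (by nlinarith))

lemma U1_lower {z : ℝ} (hz : 0 ≤ z) : (z + 7/6) ^ (-(5:ℝ)/6) ≤ U1 z := by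
  have hG : 0 < Real.Gamma (5/6) := Real.Gamma_pos_of_pos (by norm_num)
  have h : (z + 7/6) ^ (-(5:ℝ)/6) * Real.Gamma (5/6) ≤
      ∫ ξ in Set.Ioi (0:ℝ), Real.exp (-(z * ξ)) * ξ ^ (-(1:ℝ)/6) * (1 + ξ) ^ (-(7:ℝ)/6) := by
    rw [show -(5:ℝ)/6 = -(5/6) by norm_num,
      ← integral_exp_mul_rpow (r := z + 7/6) (s := -(1:ℝ)/6) (by linarith) (by norm_num)
        (by norm_num)]
    refine setIntegral_mono_on (integrableOn_exp_mul_rpow (by linarith) (by norm_num))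
      (integrableOn_U1 hz) measurableSet_Ioi fun ξ hξ => ?_
    have h0 : 0 < ξ := hξ
    have h1 : Real.exp (-(7/6 * ξ)) ≤ (1 + ξ) ^ (-(7:ℝ)/6) := by
      calc Real.exp (-(7/6 * ξ)) = (Real.exp ξ) ^ (-(7:ℝ)/6) := by
            rw [← Real.exp_mul]; congr 1; ring
        _ ≤ (1 + ξ) ^ (-(7:ℝ)/6) :=
            Real.rpow_le_rpow_of_nonpos (by linarith)
              (by linarith [Real.add_one_le_exp ξ]) (by norm_num)
    calc Real.exp (-((z + 7/6) * ξ)) * ξ ^ (-(1:ℝ)/6)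
        = Real.exp (-(z * ξ)) * ξ ^ (-(1:ℝ)/6) * Real.exp (-(7/6 * ξ)) := by
          rw [show -((z + 7/6) * ξ) = -(z * ξ) + -(7/6 * ξ) by ring, Real.exp_add]; ring
      _ ≤ _ := by gcongr
  rw [U1, one_div, ← div_eq_inv_mul, le_div_iff₀ hG]
  exact h

lemma U1_upper_large {z : ℝ} (hz : 0 < z) : U1 z ≤ z ^ (-(5:ℝ)/6) := by
  have hG : 0 < Real.Gamma (5/6) := Real.Gamma_pos_of_pos (by norm_num)
  rw [U1, one_div, ← div_eq_inv_mul, div_le_iff₀ hG, show -(5:ℝ)/6 = -(5/6) by norm_num,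
      ← integral_exp_mul_rpow (r := z) (s := -(1:ℝ)/6) hz (by norm_num) (by norm_num)]
  refine setIntegral_mono_on (integrableOn_U1 hz.le)
      (integrableOn_exp_mul_rpow hz (by norm_num)) measurableSet_Ioi fun ξ hξ => ?_
  have h0 : 0 < ξ := hξ
  exact mul_le_of_le_one_right (by positivity)
      (Real.rpow_le_one_of_one_le_of_nonpos (by linarith) (by norm_num))

lemma U1_upper_small {z : ℝ} (hz : 0 ≤ z) : U1 z ≤ U1 0 := by
  have hG : 0 < Real.Gamma (5/6) := Real.Gamma_pos_of_pos (by norm_num)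
  unfold U1
  refine mul_le_mul_of_nonneg_left ?_ (by positivity)
  refine setIntegral_mono_on (integrableOn_U1 hz) (integrableOn_U1 le_rfl) measurableSet_Ioi
    fun ξ hξ => ?_
  have h0 : 0 < ξ := hξ
  gcongr

lemma exists_comparable_U1 :
    ∃ C : ℝ, 1 ≤ C ∧ ∀ z : ℝ, 0 ≤ z → Comparable C (U1 z) ((1 + z) ^ (-(5:ℝ)/6)) := by
  have hM : (1:ℝ) ≤ max 1 (U1 0) := le_max_left _ _
  refine ⟨2 * max 1 (U1 0), by linarith, fun z hz => ?_⟩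
  have half : ∀ {p q : ℝ}, 0 < p → 0 < q → p ≤ 2 * q →
      q ^ (-(5:ℝ)/6) ≤ 2 * p ^ (-(5:ℝ)/6) := by
    intro p q hp hq h
    have hm : Comparable 2 (max p q) q :=
      ⟨by linarith [le_max_right p q], max_le h (by linarith)⟩
    have h2 := (hm.rpow (s := -(5:ℝ)/6) (by norm_num) (by positivity) hq
      (by norm_num [abs_le])).symm two_pos
    refine h2.2.trans ?_
    have := Real.rpow_le_rpow_of_nonpos hp (le_max_left p q) (show -(5:ℝ)/6 ≤ 0 by norm_num)
    linarith
  have hp : 0 < (1 + z) ^ (-(5:ℝ)/6) := by positivity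
  refine ⟨?_, ?_⟩
  · rw [inv_mul_le_iff₀ (by linarith)]
    have h1 := half (p := z + 7/6) (q := 1 + z) (by linarith) (by linarith) (by linarith)
    have h2 := U1_lower hz
    have h3 : 0 < (z + 7/6) ^ (-(5:ℝ)/6) := by positivity
    nlinarith
  · rcases le_total z 1 with h | h
    · have h1 := half (p := 1 + z) (q := 1) (by linarith) one_pos (by linarith)
      rw [Real.one_rpow] at h1
      have h2 := (U1_upper_small hz).trans (le_max_right 1 (U1 0))
      nlinarith
    · have h1 := half (p := 1 + z) (q := z) (by linarith) (by linarith) (by linarith)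
      have h2 := U1_upper_large (z := z) (by linarith)
      nlinarith

/-- The Gamma integrand that dominates the `U₂` integrand once `(1+z)^{1/6}` is factored out. -/
lemma U2_integrand_le {z ξ : ℝ} (hz : 0 ≤ z) (h0 : 0 < ξ) :
    Real.exp (-ξ) * ξ ^ (-(5:ℝ)/6) * (z + ξ) ^ ((1:ℝ)/6) ≤
      (1 + z) ^ ((1:ℝ)/6) * (Real.exp (-(1 * ξ)) * ξ ^ (-(5:ℝ)/6) +
        Real.exp (-(1 * ξ)) * ξ ^ ((1:ℝ)/6)) := by
  have h1 : (z + ξ) ^ ((1:ℝ)/6) ≤ (1 + z) ^ ((1:ℝ)/6) * (1 + ξ) := by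
    calc (z + ξ) ^ ((1:ℝ)/6) ≤ ((1 + z) * (1 + ξ)) ^ ((1:ℝ)/6) := by
          apply Real.rpow_le_rpow (by positivity) (by nlinarith) (by norm_num)
      _ = (1 + z) ^ ((1:ℝ)/6) * (1 + ξ) ^ ((1:ℝ)/6) :=
          Real.mul_rpow (by positivity) (by positivity)
      _ ≤ (1 + z) ^ ((1:ℝ)/6) * (1 + ξ) ^ (1:ℝ) := by
          gcongr
          · linarith
          · norm_num
      _ = _ := by rw [Real.rpow_one]
  have h2 : ξ ^ ((1:ℝ)/6) = ξ ^ (-(5:ℝ)/6) * ξ := by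
    rw [← Real.rpow_add_one h0.ne']; norm_num
  calc _ ≤ Real.exp (-ξ) * ξ ^ (-(5:ℝ)/6) * ((1 + z) ^ ((1:ℝ)/6) * (1 + ξ)) := by gcongr
    _ = _ := by rw [h2, one_mul]; ring

lemma integrableOn_U2_bound (z : ℝ) :
    IntegrableOn (fun ξ : ℝ => (1 + z) ^ ((1:ℝ)/6) * (Real.exp (-(1 * ξ)) * ξ ^ (-(5:ℝ)/6) +
        Real.exp (-(1 * ξ)) * ξ ^ ((1:ℝ)/6))) (Ioi 0) :=
  ((integrableOn_exp_mul_rpow one_pos (by norm_num)).add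
    (integrableOn_exp_mul_rpow one_pos (by norm_num))).const_mul _

lemma integrableOn_U2 {z : ℝ} (hz : 0 ≤ z) :
    IntegrableOn (fun ξ : ℝ => Real.exp (-ξ) * ξ ^ (-(5:ℝ)/6) * (z + ξ) ^ ((1:ℝ)/6))
      (Ioi 0) := by
  refine Integrable.mono' (integrableOn_U2_bound z) (by fun_prop) ?_
  refine ae_restrict_of_forall_mem measurableSet_Ioi fun ξ hξ => ?_
  have h0 : 0 < ξ := hξ
  rw [Real.norm_of_nonneg (by positivity)]
  exact U2_integrand_le hz h0

lemma U2_upper {z : ℝ} (hz : 0 ≤ z) : U2 z ≤ 7/6 * (1 + z) ^ ((1:ℝ)/6) := by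
  have hG : 0 < Real.Gamma (1/6) := Real.Gamma_pos_of_pos (by norm_num)
  rw [U2, one_div (Real.Gamma _), ← div_eq_inv_mul, div_le_iff₀ hG]
  refine (setIntegral_mono_on (integrableOn_U2 hz) (integrableOn_U2_bound z) measurableSet_Ioi
    fun ξ hξ => U2_integrand_le hz hξ).trans ?_
  rw [integral_const_mul, integral_add (integrableOn_exp_mul_rpow one_pos (by norm_num))
    (integrableOn_exp_mul_rpow one_pos (by norm_num)),
    integral_exp_mul_rpow (a := 1/6) one_pos (by norm_num) (by norm_num),
    integral_exp_mul_rpow (a := 7/6) one_pos (by norm_num) (by norm_num),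
    Gamma_seven_sixths, Real.one_rpow, Real.one_rpow]
  apply le_of_eq
  ring

lemma U2_lower {z : ℝ} (hz : 0 ≤ z) : 1/24 * (1 + z) ^ ((1:ℝ)/6) ≤ U2 z := by
  have hG : 0 < Real.Gamma (1/6) := Real.Gamma_pos_of_pos (by norm_num)
  rw [U2, one_div (Real.Gamma _), ← div_eq_inv_mul, le_div_iff₀ hG]
  have h2 : (1/4 : ℝ) ≤ 2 ^ (-(7/6) : ℝ) := by
    calc (1/4 : ℝ) = 2 ^ (-2 : ℝ) := by rw [Real.rpow_neg two_pos.le]; norm_num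
      _ ≤ _ := Real.rpow_le_rpow_of_exponent_le (by norm_num) (by norm_num)
  have hz' : 0 < (1 + z) ^ ((1:ℝ)/6) := by positivity
  calc 1/24 * (1 + z) ^ ((1:ℝ)/6) * Real.Gamma (1/6)
      = (1 + z) ^ ((1:ℝ)/6) * (1/4 * (1/6 * Real.Gamma (1/6))) := by ring
    _ ≤ (1 + z) ^ ((1:ℝ)/6) * (2 ^ (-(7/6) : ℝ) * (1/6 * Real.Gamma (1/6))) := by gcongr
    _ = ∫ ξ in Ioi (0:ℝ), (1 + z) ^ ((1:ℝ)/6) * (Real.exp (-(2 * ξ)) * ξ ^ ((1:ℝ)/6)) := by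
        rw [integral_const_mul, integral_exp_mul_rpow (a := 7/6) two_pos (by norm_num)
          (by norm_num), Gamma_seven_sixths]
    _ ≤ _ := ?_
  refine setIntegral_mono_on
    ((integrableOn_exp_mul_rpow two_pos (by norm_num)).const_mul _) (integrableOn_U2 hz)
    measurableSet_Ioi fun ξ hξ => ?_
  have h0 : 0 < ξ := hξ
  have hq1 : ξ / (1 + ξ) ≤ 1 := by rw [div_le_one (by positivity)]; linarith
  have hexp : Real.exp (-ξ) ≤ 1 / (1 + ξ) := by
    rw [Real.exp_neg, ← one_div]
    exact one_div_le_one_div_of_le (by positivity) (by linarith [Real.add_one_le_exp ξ])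
  have h1 : (1 + z) ^ ((1:ℝ)/6) * (ξ * Real.exp (-ξ)) ≤ (z + ξ) ^ ((1:ℝ)/6) := by
    calc (1 + z) ^ ((1:ℝ)/6) * (ξ * Real.exp (-ξ))
        ≤ (1 + z) ^ ((1:ℝ)/6) * (ξ * (1 / (1 + ξ))) := by gcongr
      _ = (1 + z) ^ ((1:ℝ)/6) * (ξ / (1 + ξ)) ^ (1:ℝ) := by rw [Real.rpow_one]; ring
      _ ≤ (1 + z) ^ ((1:ℝ)/6) * (ξ / (1 + ξ)) ^ ((1:ℝ)/6) := by
          gcongr ?_ * ?_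
          exact Real.rpow_le_rpow_of_exponent_ge (by positivity) hq1 (by norm_num)
      _ = ((1 + z) * (ξ / (1 + ξ))) ^ ((1:ℝ)/6) :=
          (Real.mul_rpow (by positivity) (by positivity)).symm
      _ ≤ (z + ξ) ^ ((1:ℝ)/6) := by
          apply Real.rpow_le_rpow (by positivity) _ (by norm_num)
          rw [← mul_div_assoc, div_le_iff₀ (by positivity)]
          nlinarith
  have h3 : ξ ^ ((1:ℝ)/6) = ξ ^ (-(5:ℝ)/6) * ξ := by
    rw [← Real.rpow_add_one h0.ne']; norm_num
  calc (1 + z) ^ ((1:ℝ)/6) * (Real.exp (-(2 * ξ)) * ξ ^ ((1:ℝ)/6))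
      = Real.exp (-ξ) * ξ ^ (-(5:ℝ)/6) * ((1 + z) ^ ((1:ℝ)/6) * (ξ * Real.exp (-ξ))) := by
        rw [h3, show -(2 * ξ) = -ξ + -ξ by ring, Real.exp_add]; ring
    _ ≤ _ := by gcongr

lemma comparable_U2 {z : ℝ} (hz : 0 ≤ z) : Comparable 24 (U2 z) ((1 + z) ^ ((1:ℝ)/6)) := by
  have h : 0 < (1 + z) ^ ((1:ℝ)/6) := by positivity
  refine ⟨by linarith [U2_lower hz], by linarith [U2_upper hz]⟩

/-! ### Passing from `U₁`, `U₂` to `φ₀`, `φ₋₁` -/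

/-- For `w ≥ 1` the quantity `1 + w/9` may be replaced by `w`. -/
lemma comparable_large {C a w s : ℝ} (hC : 1 ≤ C) (hs : |s| ≤ 1) (hw : 1 ≤ w)
    (h : Comparable C a ((1 + w / 9) ^ s)) : Comparable (C * 9) a (w ^ s) := by
  have h9 : Comparable 9 (1 + w / 9) w := ⟨by linarith, by linarith⟩
  exact h.trans (by linarith) (h9.rpow (by norm_num) (by linarith) (by linarith) hs)

/-- For `0 ≤ w ≤ 1` the quantity `1 + w/9` may be replaced by `1`. -/
lemma comparable_small {C a w s : ℝ} (hC : 1 ≤ C) (hs : |s| ≤ 1) (hw : 0 ≤ w) (hw1 : w ≤ 1)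
    (h : Comparable C a ((1 + w / 9) ^ s)) : Comparable (C * 2) a 1 := by
  have h2 : Comparable 2 (1 + w / 9) 1 := ⟨by linarith, by linarith⟩
  have := h2.rpow (s := s) (by norm_num) (by linarith) one_pos hs
  rw [Real.one_rpow] at this
  exact h.trans (by linarith) this

lemma comparable_exp {w : ℝ} (hw : 0 ≤ w) (hw1 : w ≤ 1) :
    Comparable 3 (Real.exp (-(w / 9))) 1 := by
  refine ⟨?_, ?_⟩
  · have := Real.add_one_le_exp (-(w / 9))
    norm_num
    linarith
  · have := Real.exp_le_one_iff.mpr (show -(w / 9) ≤ 0 by linarith)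
    linarith

/-- Form of `φ₀` and `φ₋₁` for `v ≥ 0`, compared with the size `t` of the `U` factor and the size
`e'` of the exponential. -/
lemma comparable_assemble {C k p e e' u t : ℝ} (hC : 1 ≤ C) (hk : Comparable 6 k 1) (hp : 0 ≤ p)
    {d : ℝ} (hd : 0 < d) (he' : 0 ≤ e') (ht : 0 ≤ t) (he : Comparable d e e')
    (hu : Comparable C u t) : Comparable (6 * d * C) (k * p * e * u) (p * e' * t) := by
  have h1 := hk.mul (by norm_num) one_pos zero_le_one hp (Comparable.refl p)
  have h2 := h1.mul (by norm_num) hd (by positivity) he' he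
  have h3 := h2.mul (by positivity) (by linarith) (by positivity) ht hu
  simpa using h3

/-- The constant `54 C` arises as `6 · 9 · C` for `v³ ≥ x`; it covers the smaller constants
`6 · 3 · 2 · C` and `9 · C` of the other two regions. -/
lemma phi_comparable {C : ℝ} (hC : 1 ≤ C)
    (hU1 : ∀ z : ℝ, 0 ≤ z → Comparable C (U1 z) ((1 + z) ^ (-(5:ℝ)/6)))
    (hU2 : ∀ z : ℝ, 0 ≤ z → Comparable C (U2 z) ((1 + z) ^ ((1:ℝ)/6))) {x v : ℝ} (hx : 0 < x) :
    (x ≤ v ^ 3 →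
      Comparable (54 * C) (phi0 x v)
        (x ^ ((1:ℝ)/6) * (v ^ 3 / x) ^ (-(5:ℝ)/6) * Real.exp (-(v ^ 3) / (9 * x))) ∧
      Comparable (54 * C) (phim1 x v)
        (x ^ (-(5:ℝ)/6) * (v ^ 3 / x) ^ ((1:ℝ)/6) * Real.exp (-(v ^ 3) / (9 * x)))) ∧
    (|v| ^ 3 ≤ x →
      Comparable (54 * C) (phi0 x v) (x ^ ((1:ℝ)/6)) ∧
      Comparable (54 * C) (phim1 x v) (x ^ (-(5:ℝ)/6))) ∧
    (x ≤ -(v ^ 3) →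
      Comparable (54 * C) (phi0 x v) (|v| ^ ((1:ℝ)/2)) ∧
      Comparable (54 * C) (phim1 x v) (|v| ^ (-(5:ℝ)/2))) := by
  have hG : 0 < Real.Gamma (1/6) := Real.Gamma_pos_of_pos (by norm_num)
  have hk0 : Comparable 6 (Real.Gamma (7/6) / Real.Gamma (1/6)) 1 := by
    rw [Gamma_seven_sixths, mul_div_assoc, div_self hG.ne']
    constructor <;> norm_num
  have hk1 : Comparable 6 (Real.Gamma (1/6) / Real.Gamma (7/6)) 1 := by
    rw [Gamma_seven_sixths, div_mul_eq_div_div, div_right_comm, div_self hG.ne']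
    constructor <;> norm_num
  have hs0 : |(-(5:ℝ)/6)| ≤ 1 := by norm_num [abs_le]
  have hs1 : |((1:ℝ)/6)| ≤ 1 := by norm_num [abs_le]
  have ez : v ^ 3 / (9 * x) = v ^ 3 / x / 9 := by field_simp
  have ez' : -(v ^ 3) / (9 * x) = -(v ^ 3 / x / 9) := by field_simp
  have ezn : -(v ^ 3 / x / 9) = (-(v ^ 3)) / x / 9 := by ring
  have hp0 : 0 ≤ x ^ ((1:ℝ)/6) := by positivity
  have hp1 : 0 ≤ x ^ (-(5:ℝ)/6) := by positivity
  refine ⟨fun h => ?_, fun h => ?_, fun h => ?_⟩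
  · have hv : 0 ≤ v := by
      by_contra hv
      push Not at hv
      nlinarith [pow_pos (neg_pos.mpr hv) 3]
    have hw : 1 ≤ v ^ 3 / x := by rwa [le_div_iff₀ hx, one_mul]
    have hE := (Real.exp_pos (-(v ^ 3 / x / 9))).le
    rw [phi0, phim1, if_neg hv.not_gt, if_neg hv.not_gt, ez, ez']
    constructor
    · have h1 := comparable_assemble (by linarith) hk0 hp0 one_pos hE (by positivity)
        (Comparable.refl _) (comparable_large hC hs0 hw (hU1 _ (by positivity)))
      convert h1 using 1 <;> ring
    · have h1 := comparable_assemble (by linarith) hk1 hp1 one_pos hE (by positivity)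
        (Comparable.refl _) (comparable_large hC hs1 hw (hU2 _ (by positivity)))
      convert h1 using 1 <;> ring
  · rcases lt_or_ge v 0 with hv | hv
    · rw [abs_of_neg hv, Odd.neg_pow (by decide)] at h
      have hv3 : 0 < -(v ^ 3) := by
        have := pow_pos (neg_pos.mpr hv) 3
        rwa [Odd.neg_pow (by decide)] at this
      have hw1 : -(v ^ 3) / x ≤ 1 := by rwa [div_le_iff₀ hx, one_mul]
      rw [phi0, phim1, if_pos hv, if_pos hv, ez', ezn]
      constructor
      · have h1 := (Comparable.refl (x ^ ((1:ℝ)/6))).mul one_pos (by linarith) hp0 zero_le_one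
          (comparable_small hC hs1 (by positivity) hw1 (hU2 _ (by positivity)))
        rw [mul_one] at h1
        exact h1.mono (by linarith) (by linarith) hp0
      · have h1 := (Comparable.refl (x ^ (-(5:ℝ)/6))).mul one_pos (by linarith) hp1 zero_le_one
          (comparable_small hC hs0 (by positivity) hw1 (hU1 _ (by positivity)))
        rw [mul_one] at h1
        exact h1.mono (by linarith) (by linarith) hp1
    · rw [abs_of_nonneg hv] at h
      have hw0 : 0 ≤ v ^ 3 / x := by positivity
      have hw1 : v ^ 3 / x ≤ 1 := by rwa [div_le_iff₀ hx, one_mul]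
      have hE := comparable_exp hw0 hw1
      rw [phi0, phim1, if_neg hv.not_gt, if_neg hv.not_gt, ez, ez']
      constructor
      · have h1 := comparable_assemble (by linarith) hk0 hp0 (by norm_num) zero_le_one zero_le_one
          hE (comparable_small hC hs0 hw0 hw1 (hU1 _ (by positivity)))
        rw [mul_one, mul_one] at h1
        exact h1.mono (by linarith) (by linarith) hp0
      · have h1 := comparable_assemble (by linarith) hk1 hp1 (by norm_num) zero_le_one zero_le_one
          hE (comparable_small hC hs1 hw0 hw1 (hU2 _ (by positivity)))
        rw [mul_one, mul_one] at h1
        exact h1.mono (by linarith) (by linarith) hp1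
  · have hv : v < 0 := by
      by_contra hv
      push Not at hv
      linarith [pow_nonneg hv 3]
    have ha : |v| ^ 3 = -(v ^ 3) := by rw [abs_of_neg hv, Odd.neg_pow (by decide)]
    have hva : 0 < |v| := abs_pos.mpr hv.ne
    have hw : 1 ≤ |v| ^ 3 / x := by rwa [le_div_iff₀ hx, one_mul, ha]
    have e : ∀ s : ℝ, x ^ s * (|v| ^ 3 / x) ^ s = |v| ^ (3 * s) := by
      intro s
      rw [← Real.mul_rpow hx.le (by positivity), mul_div_cancel₀ _ hx.ne', Real.rpow_mul hva.le]
      norm_num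
    rw [phi0, phim1, if_pos hv, if_pos hv, ez', ezn, ← ha]
    constructor
    · have h1 := (Comparable.refl (x ^ ((1:ℝ)/6))).mul one_pos (by linarith) hp0 (by positivity)
        (comparable_large hC hs1 hw (hU2 _ (by positivity)))
      rw [e, show 3 * ((1:ℝ)/6) = 1/2 by norm_num] at h1
      exact h1.mono (by linarith) (by linarith) (by positivity)
    · have h1 := (Comparable.refl (x ^ (-(5:ℝ)/6))).mul one_pos (by linarith) hp1 (by positivity)
        (comparable_large hC hs0 hw (hU1 _ (by positivity)))
      rw [e, show 3 * (-(5:ℝ)/6) = -5/2 by norm_num] at h1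
      exact h1.mono (by linarith) (by linarith) (by positivity)

theorem statement_17 :
    ∃ c : ℝ, 1 ≤ c ∧
      (∀ x v : ℝ, 0 < x →
        ((x ≤ v ^ 3 →
            c⁻¹ * (x ^ ((1:ℝ)/6) * (v ^ 3 / x) ^ (-(5:ℝ)/6) * Real.exp (-(v ^ 3) / (9 * x)))
                ≤ phi0 x v ∧
              phi0 x v
                ≤ c * (x ^ ((1:ℝ)/6) * (v ^ 3 / x) ^ (-(5:ℝ)/6) *
                    Real.exp (-(v ^ 3) / (9 * x))) ∧
              c⁻¹ * (x ^ (-(5:ℝ)/6) * (v ^ 3 / x) ^ ((1:ℝ)/6) * Real.exp (-(v ^ 3) / (9 * x)))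
                ≤ phim1 x v ∧
              phim1 x v
                ≤ c * (x ^ (-(5:ℝ)/6) * (v ^ 3 / x) ^ ((1:ℝ)/6) *
                    Real.exp (-(v ^ 3) / (9 * x)))) ∧
          (|v| ^ 3 ≤ x →
            c⁻¹ * x ^ ((1:ℝ)/6) ≤ phi0 x v ∧ phi0 x v ≤ c * x ^ ((1:ℝ)/6) ∧
              c⁻¹ * x ^ (-(5:ℝ)/6) ≤ phim1 x v ∧ phim1 x v ≤ c * x ^ (-(5:ℝ)/6)) ∧
          (x ≤ -(v ^ 3) →
            c⁻¹ * |v| ^ ((1:ℝ)/2) ≤ phi0 x v ∧ phi0 x v ≤ c * |v| ^ ((1:ℝ)/2) ∧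
              c⁻¹ * |v| ^ (-(5:ℝ)/2) ≤ phim1 x v ∧ phim1 x v ≤ c * |v| ^ (-(5:ℝ)/2)))) ∧
      ∀ x v : ℝ, 0 < x → 0 < phi0 x v ∧ 0 < phim1 x v := by
  obtain ⟨C₁, hC₁, hU1⟩ := exists_comparable_U1
  have hC : 1 ≤ max C₁ 24 := hC₁.trans (le_max_left _ _)
  have key := fun (x v : ℝ) (hx : 0 < x) => phi_comparable (v := v) hC
    (fun z hz => (hU1 z hz).mono (by linarith) (le_max_left _ _) (by positivity))
    (fun z hz => (comparable_U2 hz).mono (by norm_num) (le_max_right _ _) (by positivity)) hx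
  have hc : 0 < 54 * max C₁ 24 := by linarith
  refine ⟨54 * max C₁ 24, by linarith, fun x v hx => ?_, fun x v hx => ?_⟩
  · obtain ⟨h1, h2, h3⟩ := key x v hx
    exact ⟨fun h => ⟨(h1 h).1.1, (h1 h).1.2, (h1 h).2.1, (h1 h).2.2⟩,
      fun h => ⟨(h2 h).1.1, (h2 h).1.2, (h2 h).2.1, (h2 h).2.2⟩,
      fun h => ⟨(h3 h).1.1, (h3 h).1.2, (h3 h).2.1, (h3 h).2.2⟩⟩
  · obtain ⟨h1, h2, h3⟩ := key x v hx
    rcases le_total (|v| ^ 3) x with h | h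
    · exact ⟨(h2 h).1.pos hc (by positivity), (h2 h).2.pos hc (by positivity)⟩
    · rcases lt_or_ge v 0 with hv | hv
      · rw [abs_of_neg hv, Odd.neg_pow (by decide)] at h
        have hva : 0 < |v| := abs_pos.mpr hv.ne
        exact ⟨(h3 h).1.pos hc (by positivity), (h3 h).2.pos hc (by positivity)⟩
      · rw [abs_of_nonneg hv] at h
        have hv3 : 0 < v ^ 3 := hx.trans_le h
        exact ⟨(h1 h).1.pos hc (by positivity), (h1 h).2.pos hc (by positivity)⟩
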